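/- Let f be a smooth frame on ℝ⁴ whose first dual coframe leg f* 0 is closed as a 1-form (i.e. for every x the bilinear map (u,v) ↦ (fderiv ℝ (f* 0) x u) ⬝ v is symmetric), and suppose f is anholonomic at some point x₀, i.e. there exist indices j, k with [f j, f k](x₀) ≠ 0. For λ > 0 define the frame ê λ by ê λ 0 = f 0 and ê λ i = λ^{-1/2} • f i for i = 1, 2, 3. Then: (i) Σ_{i} (ê λ)* i converges pointwise to f* 0 and √λ • Σ_i ê λ i converges pointwise to Σ_{i=1}^{3} f i as λ → 0⁺; (ii) for every λ > 0 the connecting field of ê λ equals the connecting field C_f of f, so in particular the connecting fields converge pointwise to C_f as λ → 0⁺; and (iii) the torsion T_f of C_f is nonzero at x₀ (T_f x₀ a b c ≠ 0 for some a, b, c). -/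

import Mathlib

noncomputable section

open Filter Topology

/-- ℝ⁴, modelled as `Fin 4 → ℝ`. -/
abbrev E4 : Type := Fin 4 → ℝ

/-- Coordinate partial derivative `∂_b g (x)`. -/
def pd (g : E4 → E4) (b : Fin 4) (x : E4) : E4 :=
  fderiv ℝ g x (Pi.single b 1)

/-- `fs` is the dual coframe of the frame `f`. -/
def IsDualCoframe (f fs : Fin 4 → (E4 → E4)) : Prop :=
  ∀ (x : E4) (i j : Fin 4), (∑ a, fs i x a * f j x a) = if i = j then 1 else 0

/-- A smooth frame on ℝ⁴: four smooth vector fields forming a basis at every point. -/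
def IsSmoothFrame (f : Fin 4 → (E4 → E4)) : Prop :=
  (∀ i, ContDiff ℝ (⊤ : ℕ∞) (f i)) ∧ ∀ x : E4, LinearIndependent ℝ (fun i => f i x)

/-- Connecting field `C_f x a b c = Σ_i (f* i x) c * ∂_b (f i)^a (x)` of the frame `f`
with dual coframe `fs`. -/
def conn (f fs : Fin 4 → (E4 → E4)) (x : E4) (a b c : Fin 4) : ℝ :=
  ∑ i, fs i x c * pd (f i) b x a

/-- Torsion of the connecting field of the frame `f` with dual coframe `fs`. -/
def torsion (f fs : Fin 4 → (E4 → E4)) (x : E4) (a b c : Fin 4) : ℝ :=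
  conn f fs x a b c - conn f fs x a c b

/-- Lie bracket of vector fields on ℝ⁴. -/
def lie (X Y : E4 → E4) (x : E4) : E4 :=
  fderiv ℝ Y x (X x) - fderiv ℝ X x (Y x)

/-- Completeness relation for a dual coframe. -/
lemma dual_complete {f fs : Fin 4 → (E4 → E4)} (h : IsDualCoframe f fs) (x : E4) (a b : Fin 4) :
    (∑ i, f i x a * fs i x b) = if a = b then 1 else 0 := by
  let A : Matrix (Fin 4) (Fin 4) ℝ := fun i a => fs i x a
  let B : Matrix (Fin 4) (Fin 4) ℝ := fun a j => f j x a
  have h1 : A * B = 1 := by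
    ext i j
    rw [Matrix.mul_apply, Matrix.one_apply]
    exact h x i j
  have h2 : B * A = 1 := mul_eq_one_comm.mp h1
  have h3 := congrFun (congrFun h2 a) b
  rw [Matrix.mul_apply, Matrix.one_apply] at h3
  exact h3

/-- A covector is determined by its pairings with the frame. -/
lemma expand_dual {f fs : Fin 4 → (E4 → E4)} (h : IsDualCoframe f fs) (x : E4) (w : E4)
    (c : Fin 4) : w c = ∑ j, (∑ a, w a * f j x a) * fs j x c := by
  have h1 : ∑ j, (∑ a, w a * f j x a) * fs j x c = ∑ a, w a * ∑ j, f j x a * fs j x c := by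
    simp_rw [Finset.sum_mul, Finset.mul_sum]
    rw [Finset.sum_comm]
    simp_rw [mul_assoc]
  rw [h1]
  simp_rw [dual_complete h]
  simp

/-- Dual coframe of a rescaled frame. -/
lemma dual_rescale {f fs g gs : Fin 4 → (E4 → E4)} (h : IsDualCoframe f fs)
    (hg : IsDualCoframe g gs) (s : Fin 4 → ℝ) (hs : ∀ i, s i ≠ 0) (hgf : ∀ i, g i = s i • f i)
    (x : E4) (i : Fin 4) : gs i x = (s i)⁻¹ • fs i x := by
  have key : ∀ j, (∑ a, gs i x a * f j x a) = if i = j then (s j)⁻¹ else 0 := by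
    intro j
    have h1 := hg x i j
    have h2 : (∑ a, gs i x a * g j x a) = s j * ∑ a, gs i x a * f j x a := by
      rw [Finset.mul_sum]
      refine Finset.sum_congr rfl fun a _ => ?_
      rw [hgf j]
      simp only [Pi.smul_apply, smul_eq_mul]
      ring
    rw [h2] at h1
    have h3 := hs j
    split_ifs at h1 ⊢ with hij
    · exact eq_inv_of_mul_eq_one_right h1
    · exact (mul_eq_zero.mp h1).resolve_left h3
  ext c
  rw [expand_dual h x (gs i x) c]
  simp_rw [key]
  simp

/-- Derivative along a vector as combination of partial derivatives. -/
lemma fderiv_expand (g : E4 → E4) (x v : E4) (a : Fin 4) :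
    fderiv ℝ g x v a = ∑ b, v b * pd g b x a := by
  have hv : v = ∑ b, v b • (Pi.single b (1 : ℝ) : E4) := by
    ext c
    simp [Finset.sum_apply, Pi.single_apply]
  conv_lhs => rw [hv]
  rw [map_sum, Finset.sum_apply]
  refine Finset.sum_congr rfl fun b _ => ?_
  rw [map_smul]
  rfl

/-- The connecting field contracted with a frame leg. -/
lemma conn_contract {f fs : Fin 4 → (E4 → E4)} (h : IsDualCoframe f fs) (x : E4)
    (a b k : Fin 4) : ∑ c, conn f fs x a b c * f k x c = pd (f k) b x a := by
  have h1 : ∑ c, conn f fs x a b c * f k x c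
      = ∑ i, (∑ c, fs i x c * f k x c) * pd (f i) b x a := by
    simp only [conn, Finset.sum_mul]
    rw [Finset.sum_comm]
    refine Finset.sum_congr rfl fun i _ => Finset.sum_congr rfl fun c _ => ?_
    ring
  rw [h1]
  simp_rw [h x _ k]
  simp

/-- The torsion on two frame legs is the Lie bracket. -/
lemma torsion_contract {f fs : Fin 4 → (E4 → E4)} (h : IsDualCoframe f fs) (x : E4)
    (a j k : Fin 4) :
    ∑ b, ∑ c, torsion f fs x a b c * f j x b * f k x c = lie (f j) (f k) x a := by
  have h1 : ∑ b, ∑ c, torsion f fs x a b c * f j x b * f k x c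
      = (∑ b, f j x b * ∑ c, conn f fs x a b c * f k x c)
        - ∑ c, f k x c * ∑ b, conn f fs x a c b * f j x b := by
    simp only [torsion, Finset.mul_sum]
    rw [Finset.sum_comm (f := fun c b => f k x c * (conn f fs x a c b * f j x b)),
      ← Finset.sum_sub_distrib]
    refine Finset.sum_congr rfl fun b _ => ?_
    rw [← Finset.sum_sub_distrib]
    refine Finset.sum_congr rfl fun c _ => ?_
    ring
  rw [h1]
  simp_rw [conn_contract h]
  rw [← fderiv_expand, ← fderiv_expand]
  rfl

/-- Rescaling a frame by nonzero constants does not change the connecting field. -/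
lemma conn_rescale {f fs g gs : Fin 4 → (E4 → E4)} (h : IsDualCoframe f fs)
    (hg : IsDualCoframe g gs) (s : Fin 4 → ℝ) (hs : ∀ i, s i ≠ 0) (hgf : ∀ i, g i = s i • f i)
    (x : E4) (a b c : Fin 4) : conn g gs x a b c = conn f fs x a b c := by
  refine Finset.sum_congr rfl fun i _ => ?_
  have h1 : pd (g i) b x = s i • pd (f i) b x := by
    rw [pd, hgf i, fderiv_const_smul_field]
    rfl
  rw [h1, dual_rescale h hg s hs hgf]
  simp only [Pi.smul_apply, smul_eq_mul]
  field_simp [hs i]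

/-- for a smooth frame `f` with closed first coframe leg which is anholonomic
at some point `x₀`, the rescaled frames `ê λ` (with `ê λ 0 = f 0`, `ê λ i = λ^{-1/2} • f i`)
satisfy the convergence conditions C1*, C2*, their connecting fields are constant in `λ`
(hence converge to the connecting field of `f`), and the limiting torsion is nonzero
at `x₀`. -/
theorem stmt0
    (f fs : Fin 4 → (E4 → E4))
    (hframe : IsSmoothFrame f)
    (hdual : IsDualCoframe f fs)
    (hclosed : ∀ (x u v : E4),
      (∑ a, fderiv ℝ (fs 0) x u a * v a) = ∑ a, fderiv ℝ (fs 0) x v a * u a)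
    (x₀ : E4)
    (hanhol : ∃ j k, lie (f j) (f k) x₀ ≠ 0)
    (eh : ℝ → Fin 4 → (E4 → E4))
    (heh0 : ∀ l : ℝ, eh l 0 = f 0)
    (hehi : ∀ l : ℝ, ∀ i : Fin 4, i ≠ 0 → eh l i = (Real.sqrt l)⁻¹ • f i)
    (ehs : ℝ → Fin 4 → (E4 → E4))
    (hehs : ∀ l : ℝ, 0 < l → IsDualCoframe (eh l) (ehs l)) :
    -- (i) condition C1*: Σ_i (ê λ)* i → f* 0 pointwise
    (∀ x : E4, Tendsto (fun l : ℝ => ∑ i, ehs l i x) (nhdsWithin 0 (Set.Ioi 0))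
      (nhds (fs 0 x))) ∧
    -- (i) condition C2*: √λ • Σ_i ê λ i → Σ_{i=1}^{3} f i pointwise
    (∀ x : E4, Tendsto (fun l : ℝ => Real.sqrt l • ∑ i, eh l i x)
      (nhdsWithin 0 (Set.Ioi 0)) (nhds (∑ i ∈ ({1, 2, 3} : Finset (Fin 4)), f i x))) ∧
    -- (ii) the connecting field of ê λ equals that of f, for every λ > 0 ...
    (∀ l : ℝ, 0 < l → ∀ (x : E4) (a b c : Fin 4),
      conn (eh l) (ehs l) x a b c = conn f fs x a b c) ∧
    (∀ (x : E4) (a b c : Fin 4),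
      Tendsto (fun l : ℝ => conn (eh l) (ehs l) x a b c) (nhdsWithin 0 (Set.Ioi 0))
        (nhds (conn f fs x a b c))) ∧
    -- (iii) the torsion of C_f is nonzero at x₀
    (∃ a b c, torsion f fs x₀ a b c ≠ 0) := by
  have hs : ∀ l : ℝ, 0 < l → ∀ i : Fin 4, (if i = 0 then (1 : ℝ) else (Real.sqrt l)⁻¹) ≠ 0 := by
    intro l hl i
    have := (Real.sqrt_pos.mpr hl).ne'
    split_ifs
    · exact one_ne_zero
    · exact inv_ne_zero this
  have hgf : ∀ l : ℝ, ∀ i : Fin 4,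
      eh l i = (if i = 0 then (1 : ℝ) else (Real.sqrt l)⁻¹) • f i := by
    intro l i
    by_cases hi : i = 0
    · subst hi
      simp [heh0]
    · simp [hi, hehi l i hi]
  have hconn : ∀ l : ℝ, 0 < l → ∀ (x : E4) (a b c : Fin 4),
      conn (eh l) (ehs l) x a b c = conn f fs x a b c := fun l hl x a b c =>
    conn_rescale hdual (hehs l hl) _ (hs l hl) (hgf l) x a b c
  have hsq : Tendsto (fun l : ℝ => Real.sqrt l) (nhdsWithin 0 (Set.Ioi 0)) (nhds 0) := by
    have := Real.continuous_sqrt.tendsto 0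
    rw [Real.sqrt_zero] at this
    exact this.mono_left nhdsWithin_le_nhds
  refine ⟨fun x => ?_, fun x => ?_, hconn, fun x a b c => ?_, ?_⟩
  · have h1 : Tendsto (fun l : ℝ => fs 0 x + Real.sqrt l • (fs 1 x + fs 2 x + fs 3 x))
        (nhdsWithin 0 (Set.Ioi 0)) (nhds (fs 0 x)) := by
      simpa using (hsq.smul_const (fs 1 x + fs 2 x + fs 3 x)).const_add (fs 0 x)
    refine h1.congr' ?_
    filter_upwards [self_mem_nhdsWithin] with l hl
    have h2 := dual_rescale hdual (hehs l hl) _ (hs l hl) (hgf l) x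
    rw [Fin.sum_univ_four, h2 0, h2 1, h2 2, h2 3]
    simp [smul_add, add_assoc]
  · have h1 : Tendsto (fun l : ℝ => Real.sqrt l • f 0 x + (f 1 x + f 2 x + f 3 x))
        (nhdsWithin 0 (Set.Ioi 0)) (nhds (∑ i ∈ ({1, 2, 3} : Finset (Fin 4)), f i x)) := by
      have h3 : ∑ i ∈ ({1, 2, 3} : Finset (Fin 4)), f i x = f 1 x + f 2 x + f 3 x := by
        rw [Finset.sum_insert (by decide), Finset.sum_insert (by decide),
          Finset.sum_singleton, add_assoc]
      rw [h3]
      simpa using (hsq.smul_const (f 0 x)).add_const (f 1 x + f 2 x + f 3 x)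
    refine h1.congr' ?_
    filter_upwards [self_mem_nhdsWithin] with l hl
    have hp := (Real.sqrt_pos.mpr hl).ne'
    rw [Fin.sum_univ_four, hgf l 0, hgf l 1, hgf l 2, hgf l 3]
    simp [smul_add, smul_smul, add_assoc, hp]
  · refine tendsto_const_nhds.congr' ?_
    filter_upwards [self_mem_nhdsWithin] with l hl
    exact (hconn l hl x a b c).symm
  · obtain ⟨j, k, hjk⟩ := hanhol
    by_contra hcon
    push Not at hcon
    apply hjk
    ext a
    rw [← torsion_contract hdual]
    simp [hcon]
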